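/- arXiv:2208.05655 — 2 statements merged into one kernel-verified Lean document; each statement's English description precedes it below -/
import Mathlib

section
/- Every 𝔄-retraction τ: A → 𝔄 is completely positive; in particular, for all a₁,…,aₙ ∈ A and α₁,…,αₙ ∈ 𝔄 one has Σᵢ,ⱼ αᵢ* τ(aᵢ* aⱼ) αⱼ ≥ 0 in 𝔄. -/
open Filter Topology

noncomputable section

/-- A positive element of a `*`-ring: one of the form `star b * b`. -/
def IsPosElem {R : Type} [Mul R] [Star R] (x : R) : Prop := ∃ b : R, x = star b * b

/-- Positivity for an `n × n` matrix over a `*`-ring, phrased entrywise: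
`M = star b * b` for some rectangular matrix `b`. -/
def MatPos {R : Type} [AddCommMonoid R] [Mul R] [Star R] {n : ℕ}
    (M : Fin n → Fin n → R) : Prop :=
  ∃ (m : ℕ) (b : Fin m → Fin n → R), ∀ i j, M i j = ∑ k, star (b k i) * b k j

/-- A map between `*`-rings is completely positive if all its amplifications map
positive matrices to positive matrices. -/
def IsCPMap {R Z : Type} [AddCommMonoid R] [Mul R] [Star R]
    [AddCommMonoid Z] [Mul Z] [Star Z] (φ : R → Z) : Prop :=
  ∀ (n : ℕ) (M : Fin n → Fin n → R), MatPos M → MatPos (fun i j => φ (M i j))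

variable (𝔄 A : Type) [NonUnitalCStarAlgebra 𝔄] [NonUnitalCStarAlgebra A]

/-- A compatible right Banach `𝔄`-module structure on the C*-algebra `A`,
making `A` an `𝔄`-C*-module. -/
structure CStarAction where
  act : A → 𝔄 → A
  act_add : ∀ (a : A) (α β : 𝔄), act a (α + β) = act a α + act a β
  add_act : ∀ (a b : A) (α : 𝔄), act (a + b) α = act a α + act b α
  act_smulC : ∀ (c : ℂ) (a : A) (α : 𝔄), act a (c • α) = c • act a α
  smulC_act : ∀ (c : ℂ) (a : A) (α : 𝔄), act (c • a) α = c • act a α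
  norm_act : ∀ (a : A) (α : 𝔄), ‖act a α‖ ≤ ‖a‖ * ‖α‖
  mul_act : ∀ (a b : A) (α : 𝔄), act (a * b) α = a * act b α
  act_mul : ∀ (a : A) (α β : 𝔄), act a (α * β) = act (act a α) β
  star_compat : ∀ (a : A) (α β : 𝔄),
    act (star (act (star a) (star α))) β = star (act (star (act a β)) (star α))

variable {𝔄 A}

/-- The associated left action `α • a := (a* • α*)*`. -/
def CStarAction.lact (S : CStarAction 𝔄 A) (α : 𝔄) (a : A) : A :=
  star (S.act (star a) (star α))

/-- The action is non degenerate if `a • α = 0` for all `a` forces `α = 0`. -/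
def CStarAction.NonDegenerate (S : CStarAction 𝔄 A) : Prop :=
  ∀ α : 𝔄, (∀ a : A, S.act a α = 0) → α = 0

/-- The two-sided action is a biaction: `(a • α) b = a (α • b)`. -/
def CStarAction.Biaction (S : CStarAction 𝔄 A) : Prop :=
  ∀ (a : A) (α : 𝔄) (b : A), S.act a α * b = a * S.lact α b

/-- An `𝔄`-retraction: a positive right `𝔄`-module map `τ : A → 𝔄` with strictly dense
image such that `τ` sends some bounded approximate identity of `A` strictly to a
projection `p` of `𝔄`.  (Nets are encoded by filters.) -/
structure IsRetraction (S : CStarAction 𝔄 A) (τ : A → 𝔄) : Prop where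
  map_add : ∀ a b : A, τ (a + b) = τ a + τ b
  map_smulC : ∀ (c : ℂ) (a : A), τ (c • a) = c • τ a
  pos : ∀ a : A, IsPosElem (τ (star a * a))
  map_act : ∀ (a : A) (α : 𝔄), τ (S.act a α) = τ a * α
  strict_dense : ∀ (β : 𝔄) (ε : ℝ), 0 < ε → ∀ s : Finset 𝔄,
    ∃ a : A, ∀ α ∈ s, ‖τ (S.act a α) - β * α‖ < ε
  bai : ∃ (l : Filter A) (p : 𝔄), l.NeBot ∧ (∃ C : ℝ, ∀ᶠ e in l, ‖e‖ ≤ C) ∧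
    (∀ a : A, Tendsto (fun e => e * a) l (𝓝 a)) ∧
    (∀ a : A, Tendsto (fun e => a * e) l (𝓝 a)) ∧
    star p = p ∧ p * p = p ∧
    (∀ α : 𝔄, Tendsto (fun e => τ e * α) l (𝓝 (p * α))) ∧
    (∀ α : 𝔄, Tendsto (fun e => α * τ e) l (𝓝 (α * p)))

/-- An `𝔄`-trace: a tracial `𝔄`-retraction. -/
structure IsATrace (S : CStarAction 𝔄 A) (τ : A → 𝔄) extends IsRetraction S τ : Prop where
  tracial : ∀ a b : A, τ (a * b) = τ (b * a)

/-!
A map `τ` with `τ (a* a) ≥ 0` satisfies `τ (a* b)* = τ (b* a)` by polarization. As `τ` is right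
`𝔄`-linear, it follows that `τ ((aα)* (bβ)) = α* τ (a* b) β`, so that `∑ᵢⱼ αᵢ* τ (aᵢ* aⱼ) αⱼ` is
the value of `τ` at `c* c` for `c = ∑ᵢ aᵢ αᵢ`: the quadratic form of the matrix `(τ (aᵢ* aⱼ))` is
nonnegative. Such a matrix `T` is positive: taking for `αᵢ` the entries of the `k`-th column of
`T⁻` makes the form the `k`-th diagonal entry of `T⁻ T T⁻ = -(T⁻)³`; hence `(T⁻)³` is a positive
matrix with nonpositive diagonal, and vanishes. Every positive matrix over `A` is a sum of
matrices `(aᵢ* aⱼ)`.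
-/

section StarAlgebra

variable {R B : Type*} [NonUnitalNonAssocRing R] [StarRing R] [Module ℂ R] [StarModule ℂ R]
  [IsScalarTower ℂ R R] [SMulCommClass ℂ R R]

theorem star_map_star_mul_of_isSelfAdjoint [AddCommGroup B] [StarAddMonoid B] [Module ℂ B]
    [StarModule ℂ B] (τ : R →ₗ[ℂ] B) (hτ : ∀ a, IsSelfAdjoint (τ (star a * a))) (a b : R) :
    star (τ (star a * b)) = τ (star b * a) := by
  have cross (c : R) : IsSelfAdjoint (τ (star a * c) + τ (star c * a)) := by
    have h := ((hτ (a + c)).sub (hτ a)).sub (hτ c)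
    simp only [star_add, add_mul, mul_add, map_add] at h
    convert h using 1
    abel
  have sum_eq : star (τ (star a * b)) + star (τ (star b * a)) =
      τ (star a * b) + τ (star b * a) := by
    rw [← star_add, (cross b).star_eq]
  have sub_eq : star (τ (star b * a)) - star (τ (star a * b)) =
      τ (star a * b) - τ (star b * a) := by
    refine smul_right_injective B Complex.I_ne_zero ?_
    have h := (cross (Complex.I • b)).star_eq
    simp only [star_smul, mul_smul_comm, smul_mul_assoc, neg_mul, map_neg, map_smul, star_add,
      star_neg, Complex.star_def, Complex.conj_I, neg_smul, neg_neg] at h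
    simp only [smul_sub]
    rwa [sub_eq_neg_add, sub_eq_add_neg]
  refine smul_right_injective B (two_ne_zero' ℂ) ?_
  calc (2 : ℂ) • star (τ (star a * b))
      = (star (τ (star a * b)) + star (τ (star b * a))) -
          (star (τ (star b * a)) - star (τ (star a * b))) := by rw [two_smul]; abel
    _ = (2 : ℂ) • τ (star b * a) := by rw [sum_eq, sub_eq, two_smul]; abel

variable [NonUnitalRing B] [StarRing B] [Module ℂ B] [StarModule ℂ B]
  {act : R → B → R} {τ : R →ₗ[ℂ] B}

theorem map_star_act_mul_act (hact : ∀ a b β, act (a * b) β = a * act b β)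
    (hτact : ∀ a β, τ (act a β) = τ a * β) (hτ : ∀ a, IsSelfAdjoint (τ (star a * a)))
    (a b : R) (α β : B) :
    τ (star (act a α) * act b β) = star α * τ (star a * b) * β :=
  calc τ (star (act a α) * act b β) = τ (star (act a α) * b) * β := by rw [← hact, hτact]
    _ = star (τ (star b * a) * α) * β := by
      rw [← star_map_star_mul_of_isSelfAdjoint τ hτ, ← hact, hτact]
    _ = star α * τ (star a * b) * β := by
      rw [star_mul, star_map_star_mul_of_isSelfAdjoint τ hτ]

theorem map_star_sum_act_mul_sum_act (hact : ∀ a b β, act (a * b) β = a * act b β)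
    (hτact : ∀ a β, τ (act a β) = τ a * β) (hτ : ∀ a, IsSelfAdjoint (τ (star a * a)))
    {ι : Type*} (s : Finset ι) (a : ι → R) (α : ι → B) :
    τ (star (∑ i ∈ s, act (a i) (α i)) * ∑ j ∈ s, act (a j) (α j)) =
      ∑ i ∈ s, ∑ j ∈ s, star (α i) * τ (star (a i) * a j) * α j := by
  simp only [star_sum, Finset.sum_mul_sum, map_sum, map_star_act_mul_act hact hτact hτ]

end StarAlgebra

section Nonneg

variable {B : Type*} [NonUnitalCStarAlgebra B] {a : B}

theorem negPart_mul_mul_negPart (ha : IsSelfAdjoint a) : a⁻ * a * a⁻ = -(a⁻ * a⁻ * a⁻) :=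
  calc a⁻ * a * a⁻ = a⁻ * (a⁺ - a⁻) * a⁻ := by rw [CFC.posPart_sub_negPart a ha]
    _ = -(a⁻ * a⁻ * a⁻) := by rw [mul_sub, CFC.negPart_mul_posPart, zero_sub, neg_mul]

variable [PartialOrder B] [StarOrderedRing B]

theorem negPart_mul_mul_negPart_nonpos (ha : IsSelfAdjoint a) : a⁻ * a * a⁻ ≤ 0 := by
  rw [negPart_mul_mul_negPart ha, Left.neg_nonpos_iff]
  exact conjugate_nonneg_of_nonneg (CFC.negPart_nonneg a) (CFC.negPart_nonneg a)

-- Stated for an abstract algebra because the `ℝ`-algebra instances required by the Mathlib lemma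
-- are not found on `CStarMatrix`.
theorem nonneg_iff_exists_eq_star_mul_self : 0 ≤ a ↔ ∃ b, a = star b * b :=
  CStarAlgebra.nonneg_iff_eq_star_mul_self

theorem nonneg_of_forall_conjugate_eq_zero_of_nonpos (ha : IsSelfAdjoint a)
    (h : ∀ b, IsSelfAdjoint b → b * a * b ≤ 0 → b * a * b = 0) : 0 ≤ a := by
  have hself : IsSelfAdjoint a⁻ := .of_nonneg (CFC.negPart_nonneg a)
  have hcube : a⁻ * a⁻ * a⁻ = 0 := by
    rw [← neg_eq_zero, ← negPart_mul_mul_negPart ha]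
    exact h _ hself (negPart_mul_mul_negPart_nonpos ha)
  have hsq : a⁻ * a⁻ = 0 := by
    rw [← CStarRing.star_mul_self_eq_zero_iff, star_mul, hself.star_eq, ← mul_assoc, hcube,
      zero_mul]
  rw [← CFC.negPart_eq_zero_iff a ha, ← CStarRing.star_mul_self_eq_zero_iff, hself.star_eq, hsq]

end Nonneg

section CStarMatrix

variable {ι B : Type*} [Fintype ι] [NonUnitalCStarAlgebra B] [PartialOrder B] [StarOrderedRing B]

theorem cstarMatrix_eq_zero_of_nonneg_of_diag_nonpos {X : CStarMatrix ι ι B} (hX : 0 ≤ X)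
    (hdiag : ∀ k, X k k ≤ 0) : X = 0 := by
  obtain ⟨W, rfl⟩ := nonneg_iff_exists_eq_star_mul_self.mp hX
  have hW : W = 0 := by
    ext i k
    have hsum : ∑ l, star (W l k) * W l k ≤ 0 := by
      simpa only [CStarMatrix.mul_apply, CStarMatrix.star_apply] using hdiag k
    have hterm : star (W i k) * W i k ≤ 0 :=
      (Finset.single_le_sum (f := fun l => star (W l k) * W l k)
        (fun l _ => star_mul_self_nonneg _) (Finset.mem_univ i)).trans hsum
    exact (CStarRing.star_mul_self_eq_zero_iff _).mp (hterm.antisymm (star_mul_self_nonneg _))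
  rw [hW, mul_zero]

theorem cstarMatrix_nonneg_of_quadraticForm_nonneg {T : CStarMatrix ι ι B}
    (hT : IsSelfAdjoint T) (h : ∀ x : ι → B, 0 ≤ ∑ i, ∑ j, star (x i) * T i j * x j) :
    0 ≤ T := by
  refine nonneg_of_forall_conjugate_eq_zero_of_nonpos hT fun N hN hNTN => ?_
  have hdiag (k : ι) : 0 ≤ (N * T * N) k k := by
    convert h fun i => N i k using 1
    simp only [CStarMatrix.mul_apply, Finset.sum_mul, CStarMatrix.star_apply_of_isSelfAdjoint hN]
    exact Finset.sum_comm
  refine neg_eq_zero.mp <|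
    cstarMatrix_eq_zero_of_nonneg_of_diag_nonpos (Left.nonneg_neg_iff.mpr hNTN) fun k => ?_
  rw [CStarMatrix.neg_apply, Left.neg_nonpos_iff]
  exact hdiag k

theorem cstarMatrix_gram_nonneg {R : Type*} [NonUnitalNonAssocRing R] [StarRing R] [Module ℂ R]
    [StarModule ℂ R] [IsScalarTower ℂ R R] [SMulCommClass ℂ R R] {act : R → B → R} {τ : R →ₗ[ℂ] B}
    (hact : ∀ a b β, act (a * b) β = a * act b β) (hτact : ∀ a β, τ (act a β) = τ a * β)
    (hτ : ∀ a, 0 ≤ τ (star a * a)) (a : ι → R) :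
    0 ≤ CStarMatrix.ofMatrix fun i j => τ (star (a i) * a j) := by
  have hself (r : R) : IsSelfAdjoint (τ (star r * r)) := .of_nonneg (hτ r)
  refine cstarMatrix_nonneg_of_quadraticForm_nonneg ?_ fun x => ?_
  · ext i j
    exact star_map_star_mul_of_isSelfAdjoint τ hself (a j) (a i)
  · have hsum := hτ (∑ i, act (a i) (x i))
    rwa [map_star_sum_act_mul_sum_act hact hτact hself] at hsum

end CStarMatrix

theorem matPos_of_cstarMatrix_nonneg {B : Type} [NonUnitalCStarAlgebra B] [PartialOrder B]
    [StarOrderedRing B] {n : ℕ} {M : Fin n → Fin n → B} (hM : 0 ≤ CStarMatrix.ofMatrix M) :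
    MatPos M := by
  obtain ⟨W, hW⟩ := nonneg_iff_exists_eq_star_mul_self.mp hM
  refine ⟨n, W, fun i j => ?_⟩
  rw [← CStarMatrix.ofMatrix_apply (M := M), hW, CStarMatrix.mul_apply]
  simp only [CStarMatrix.star_apply]

theorem isCPMap_of_gram_nonneg {R B : Type} [NonUnitalNonAssocSemiring R] [Star R]
    [NonUnitalCStarAlgebra B] [PartialOrder B] [StarOrderedRing B] (τ : R →+ B)
    (h : ∀ (n : ℕ) (a : Fin n → R),
      0 ≤ CStarMatrix.ofMatrix fun i j => τ (star (a i) * a j)) : IsCPMap τ := by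
  rintro n M ⟨m, b, hM⟩
  refine matPos_of_cstarMatrix_nonneg ?_
  have hsum : CStarMatrix.ofMatrix (fun i j => τ (M i j)) =
      ∑ k, CStarMatrix.ofMatrix fun i j => τ (star (b k i) * b k j) := by
    ext i j
    simp only [hM, map_sum]
    exact (Matrix.sum_apply i j Finset.univ
      fun k => Matrix.of fun i j => τ (star (b k i) * b k j)).symm
  rw [hsum]
  exact Finset.sum_nonneg fun k _ => h n (b k)

theorem retraction_completely_positive_general
    {𝔄 R : Type} [NonUnitalCStarAlgebra 𝔄] [NonUnitalNonAssocRing R] [StarRing R] [Module ℂ R]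
    [StarModule ℂ R] [IsScalarTower ℂ R R] [SMulCommClass ℂ R R]
    {act : R → 𝔄 → R} (hact : ∀ a b α, act (a * b) α = a * act b α)
    {τ : R →ₗ[ℂ] 𝔄} (hτact : ∀ a α, τ (act a α) = τ a * α)
    (hτ : ∀ a, IsPosElem (τ (star a * a))) :
    IsCPMap τ ∧
      ∀ (n : ℕ) (a : Fin n → R) (α : Fin n → 𝔄),
        IsPosElem (∑ i, ∑ j, star (α i) * τ (star (a i) * a j) * α j) := by
  let _ := CStarAlgebra.spectralOrder 𝔄
  let _ := CStarAlgebra.spectralOrderedRing 𝔄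
  have hnonneg (a : R) : 0 ≤ τ (star a * a) :=
    nonneg_iff_exists_eq_star_mul_self.mpr (hτ a)
  refine ⟨isCPMap_of_gram_nonneg τ.toAddMonoidHom fun n a =>
    cstarMatrix_gram_nonneg hact hτact hnonneg a, fun n a α => ?_⟩
  rw [← map_star_sum_act_mul_sum_act hact hτact fun a => .of_nonneg (hnonneg a)]
  exact hτ _

/-- Every `𝔄`-retraction `τ : A → 𝔄` is completely positive; in particular,
for all `a₁, …, aₙ ∈ A` and `α₁, …, αₙ ∈ 𝔄` one has
`∑ᵢⱼ αᵢ* τ(aᵢ* aⱼ) αⱼ ≥ 0` in `𝔄`. -/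
theorem retraction_completely_positive
    {𝔄 A : Type} [NonUnitalCStarAlgebra 𝔄] [NonUnitalCStarAlgebra A]
    (S : CStarAction 𝔄 A) (τ : A → 𝔄) (hτ : IsRetraction S τ) :
    IsCPMap τ ∧
      ∀ (n : ℕ) (a : Fin n → A) (α : Fin n → 𝔄),
        IsPosElem (∑ i, ∑ j, star (α i) * τ (star (a i) * a j) * α j) :=
  retraction_completely_positive_general
    (τ := { toFun := τ, map_add' := hτ.map_add, map_smul' := hτ.map_smulC })
    S.mul_act hτ.map_act hτ.pos
end
end

section
/- If the action of 𝔄 on A is non degenerate, then the 𝔄-retractions are exactly those linear maps τ: A → 𝔄 which extend to an idempotent contractive completely positive map τ̃: M(A) → 𝔄 that is strictly continuous on the unit ball of M(A). -/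
open Filter Topology

noncomputable section

variable (𝔄 A : Type) [NonUnitalCStarAlgebra 𝔄] [NonUnitalCStarAlgebra A]

variable {𝔄 A}

open MultiplierAlgebra

variable {𝔄 A : Type} [NonUnitalCStarAlgebra 𝔄] [NonUnitalCStarAlgebra A]

/-- Right multiplication by `α ∈ 𝔄` as a continuous linear map on `A`. -/
def CStarAction.actCLM (S : CStarAction 𝔄 A) (α : 𝔄) : A →L[ℂ] A :=
  LinearMap.mkContinuous
    { toFun := fun a => S.act a α
      map_add' := fun a b => S.add_act a b α
      map_smul' := fun c a => S.smulC_act c a α }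
    ‖α‖ (fun a => by simpa [mul_comm] using S.norm_act a α)

/-- Left multiplication by `α ∈ 𝔄` as a continuous linear map on `A`. -/
def CStarAction.lactCLM (S : CStarAction 𝔄 A) (α : 𝔄) : A →L[ℂ] A :=
  LinearMap.mkContinuous
    { toFun := fun a => S.lact α a
      map_add' := fun a b => by simp [CStarAction.lact, star_add, S.add_act]
      map_smul' := fun c a => by
        simp [CStarAction.lact, star_smul, S.smulC_act, star_smul]
      }
    ‖α‖ (fun a => by
      have := S.norm_act (star a) (star α)
      simpa [CStarAction.lact, mul_comm] using this)

/-- The canonical map `𝔄 → M(A)` sending `α` to the double centralizer `(Lα, Rα)`. -/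
def CStarAction.iotaM (S : CStarAction 𝔄 A) (hbi : S.Biaction) (α : 𝔄) : 𝓜(ℂ, A) :=
  { fst := S.lactCLM α
    snd := S.actCLM α
    central := fun x y => (hbi x α y) }

/-!
A retraction `τ` is a positive map whose values along some approximate identity converge in norm
to a unit `p` of `𝔄`: dense range forces the projection `p` to be a unit, and against a unit
strict convergence is norm convergence. For a positive map such convergence passes to the
canonical increasing approximate unit `(u)`: every increasing real functional of `τ u` tends to its
value at `p`, and by Hahn-Banach, applied to the convex set of elements below some `τ u`, this weak
convergence of an increasing net is norm convergence (a noncommutative Dini theorem). Now the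
`𝔄`-valued Cauchy-Schwarz inequality gives `‖τ (x - x u)‖ ≤ ‖x‖ ‖p - τ u‖^(1/2)`, so `τ (m u)`
converges for every multiplier `m`, uniformly on the unit ball, and its limit is the extension. It
is completely positive because a matrix over `𝔄` is positive as soon as its quadratic form is, and
the module property reduces the quadratic form to positivity of the extension itself.

Conversely, a completely positive contraction of `M(A)` that is the identity on `𝔄` has `𝔄` in its
multiplicative domain. Hence it is an `𝔄`-module map and sends `1` to a unit of `𝔄`, which strict
continuity exhibits as the limit along the approximate unit.
-/

section OrderedHahnBanach

variable {E : Type*} [AddCommGroup E] [PartialOrder E] [IsOrderedAddMonoid E] [Module ℝ E]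
  [PosSMulMono ℝ E] [TopologicalSpace E] [IsTopologicalAddGroup E] [ContinuousSMul ℝ E]
  [LocallyConvexSpace ℝ E]

lemma mem_closure_of_forall_monotone_le {D : Set E} (hconv : Convex ℝ D) (hlow : IsLowerSet D)
    (hne : D.Nonempty) {p : E}
    (h : ∀ f : E →L[ℝ] ℝ, Monotone f → ∀ s, (∀ x ∈ D, f x ≤ s) → f p ≤ s) : p ∈ closure D := by
  by_contra hp
  obtain ⟨f, s, hfs, hsp⟩ := geometric_hahn_banach_closed_point hconv.closure isClosed_closure hp
  have hfD (x : E) (hx : x ∈ D) : f x < s := hfs x (subset_closure hx)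
  refine hsp.not_ge (h f ((monotone_iff_map_nonneg f).2 fun y hy => ?_) s fun x hx => (hfD x hx).le)
  obtain ⟨x, hx⟩ := hne
  by_contra! hfy
  have ht : 0 ≤ (f x - s) / f y := div_nonneg_of_nonpos (sub_nonpos.2 (hfD x hx).le) hfy.le
  have := hfD (x - ((f x - s) / f y) • y) (hlow (sub_le_self x (smul_nonneg ht hy)) hx)
  rw [map_sub, map_smul, smul_eq_mul, div_mul_cancel₀ _ hfy.ne] at this
  linarith

lemma le_of_forall_monotone_le [ClosedIicTopology E] {x y : E}
    (h : ∀ f : E →L[ℝ] ℝ, Monotone f → f x ≤ f y) : x ≤ y := by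
  suffices x ∈ closure (Set.Iic y) by rwa [isClosed_Iic.closure_eq] at this
  exact mem_closure_of_forall_monotone_le (convex_Iic y) (isLowerSet_Iic y) Set.nonempty_Iic
    fun f hf s hs => (h f hf).trans (hs y Set.self_mem_Iic)

end OrderedHahnBanach

section PositiveBall

lemma mem_closure_nonneg_ball {E : Type*} [NormedAddCommGroup E] [NormedSpace ℝ E]
    [PartialOrder E] [PosSMulMono ℝ E] {x : E} (hx : 0 ≤ x) (hx1 : ‖x‖ ≤ 1) :
    x ∈ closure {y : E | 0 ≤ y ∧ ‖y‖ < 1} := by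
  have hlim : Tendsto (fun r : ℝ => r • x) (𝓝[<] 1) (𝓝 x) := by
    have h : Tendsto (fun r : ℝ => r • x) (𝓝 1) (𝓝 ((1 : ℝ) • x)) :=
      (continuous_id.smul continuous_const).tendsto 1
    rw [one_smul] at h
    exact h.mono_left nhdsWithin_le_nhds
  refine mem_closure_of_tendsto hlim ?_
  filter_upwards [Ioo_mem_nhdsLT (zero_lt_one' ℝ)] with r hr
  refine ⟨smul_nonneg hr.1.le hx, ?_⟩
  rw [norm_smul, Real.norm_of_nonneg hr.1.le]
  exact mul_lt_one_of_nonneg_of_lt_one_left hr.1.le hr.2 hx1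

variable {B : Type*} [NonUnitalCStarAlgebra B] [PartialOrder B] [StarOrderedRing B]

lemma mul_self_le_self_of_norm_le_one {x : B} (hx : 0 ≤ x) (hx1 : ‖x‖ ≤ 1) : x * x ≤ x := by
  obtain ⟨s, hs, rfl⟩ : ∃ s : B, star s = s ∧ s * s = x :=
    ⟨CFC.sqrt x, (CFC.sqrt_nonneg x).star_eq, CFC.sqrt_mul_sqrt_self x⟩
  calc s * s * (s * s) = star s * (s * s) * s := by simp only [hs, mul_assoc]
    _ ≤ ‖s * s‖ • (star s * s) :=
      CStarAlgebra.star_left_conjugate_le_norm_smul hx.isSelfAdjoint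
    _ ≤ (1 : ℝ) • (s * s) := by
      rw [hs]
      exact smul_le_smul_of_nonneg_right hx1 hx
    _ = s * s := one_smul ℝ _

lemma eventually_approximateUnit_le {u : B} (hu : 0 ≤ u) (hu1 : ‖u‖ < 1) :
    ∀ᶠ v in CStarAlgebra.approximateUnit B, u ≤ v ∧ ‖v‖ ≤ 1 := by
  filter_upwards [(CStarAlgebra.hasBasis_approximateUnit B).mem_of_mem ⟨hu, hu1⟩] with v hv
  exact ⟨hv.1, by simpa using hv.2⟩

lemma mul_self_sub_le_sub {u v : B} (hu : 0 ≤ u) (huv : u ≤ v) (hv : ‖v‖ ≤ 1) :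
    (v - u) * (v - u) ≤ v - u :=
  mul_self_le_self_of_norm_le_one (sub_nonneg.2 huv) <|
    (CStarAlgebra.norm_le_norm_of_nonneg_of_le (sub_nonneg.2 huv) (sub_le_self v hu)).trans hv

end PositiveBall

section PositiveFunctional

lemma sq_map_star_mul_add_star_mul_le {R : Type*} [NonUnitalRing R] [StarRing R] [Module ℝ R]
    [StarModule ℝ R] [IsScalarTower ℝ R R] [SMulCommClass ℝ R R] (g : R →ₗ[ℝ] ℝ)
    (hg : ∀ x, 0 ≤ g (star x * x)) (x y : R) :
    g (star y * x + star x * y) ^ 2 ≤ 4 * g (star y * y) * g (star x * x) := by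
  refine sub_nonpos.1 (discrim_le_zero (a := g (star y * y)) (c := g (star x * x)) fun t => ?_)
  have hexp : g (star (t • y + x) * (t • y + x)) =
      g (star y * y) * (t * t) + g (star y * x + star x * y) * t + g (star x * x) := by
    simp only [star_add, star_smul, star_trivial, add_mul, mul_add, smul_mul_assoc, mul_smul_comm,
      map_add, map_smul, smul_eq_mul]
    ring
  exact hexp ▸ hg (t • y + x)

variable {B : Type*} [NonUnitalCStarAlgebra B] [PartialOrder B] [StarOrderedRing B]

lemma sq_map_add_star_sub_le {g : B →L[ℝ] ℝ} (hg : Monotone g) {K : ℝ}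
    (hK : ∀ x, 0 ≤ x → ‖x‖ < 1 → g x ≤ K) (e : B) {u : B} (hu : 0 ≤ u) (hu1 : ‖u‖ < 1) :
    (g (e + star e) - g (e * u + u * star e)) ^ 2 ≤ 4 * g (e * star e) * (K - g u) := by
  have hau := CStarAlgebra.increasingApproximateUnit B
  have hg0 := (monotone_iff_map_nonneg g).1 hg
  have hlim : Tendsto (fun v => (g (e * v + v * star e) - g (e * u + u * star e)) ^ 2)
      (CStarAlgebra.approximateUnit B)
      (𝓝 ((g (e + star e) - g (e * u + u * star e)) ^ 2)) :=
    (((g.continuous.tendsto _).comp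
      ((hau.tendsto_mul_left e).add (hau.tendsto_mul_right (star e)))).sub_const _).pow 2
  have := hau.neBot
  refine le_of_tendsto hlim ?_
  filter_upwards [eventually_approximateUnit_le hu hu1] with v ⟨huv, hv1⟩
  have hgv : g v ≤ K := closure_minimal (fun x hx => hK x hx.1 hx.2)
    (isClosed_le g.continuous continuous_const) (mem_closure_nonneg_ball (hu.trans huv) hv1)
  have hvu : g ((v - u) * (v - u)) ≤ K - g u := by
    have := hg (mul_self_sub_le_sub hu huv hv1)
    rw [map_sub] at this
    linarith
  have hcs := sq_map_star_mul_add_star_mul_le (g : B →ₗ[ℝ] ℝ)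
    (fun x => hg0 _ (star_mul_self_nonneg x)) (v - u) (star e)
  rw [star_star, (sub_nonneg.2 huv).star_eq] at hcs
  calc (g (e * v + v * star e) - g (e * u + u * star e)) ^ 2
      = g (e * (v - u) + (v - u) * star e) ^ 2 := by
        rw [← map_sub, mul_sub, sub_mul, add_sub_add_comm]
    _ ≤ 4 * g (e * star e) * g ((v - u) * (v - u)) := hcs
    _ ≤ 4 * g (e * star e) * (K - g u) :=
        mul_le_mul_of_nonneg_left hvu
          (mul_nonneg zero_le_four (hg0 _ (mul_star_self_nonneg e)))

lemma sq_two_mul_sub_map_le_of_isApproximateUnit {g : B →L[ℝ] ℝ} (hg : Monotone g) {K : ℝ}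
    (hK : ∀ x, 0 ≤ x → ‖x‖ < 1 → g x ≤ K) {l : Filter B} (hl : l.IsApproximateUnit) {C : ℝ}
    (hC : ∀ᶠ e in l, ‖e‖ ≤ C) {L : ℝ} (hL : Tendsto (fun e => g (e + star e)) l (𝓝 (2 * L)))
    {u : B} (hu : 0 ≤ u) (hu1 : ‖u‖ < 1) :
    (2 * L - 2 * g u) ^ 2 ≤ 4 * (‖g‖ * (C * C)) * (K - g u) := by
  have := hl.neBot
  have hlu : Tendsto (fun e => e * u + u * star e) l (𝓝 (u + u)) := by
    simpa [hu.star_eq] using (hl.tendsto_mul_right u).add (hl.tendsto_mul_right u).star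
  have hlim := (hL.sub ((g.continuous.tendsto _).comp hlu)).pow 2
  rw [map_add, ← two_mul] at hlim
  refine le_of_tendsto hlim (hC.mono fun e he => ?_)
  have hee : g (e * star e) ≤ ‖g‖ * (C * C) :=
    calc g (e * star e) ≤ ‖g‖ * ‖e * star e‖ := (le_abs_self _).trans (g.le_opNorm _)
      _ = ‖g‖ * (‖e‖ * ‖e‖) := by rw [CStarRing.norm_self_mul_star]
      _ ≤ ‖g‖ * (C * C) := by gcongr; exact (norm_nonneg e).trans he
  have huK : 0 ≤ K - g u := sub_nonneg.2 (hK u hu hu1)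
  exact (sq_map_add_star_sub_le hg hK e hu hu1).trans (by gcongr)

lemma isLUB_image_nonneg_ball_of_isApproximateUnit {g : B →L[ℝ] ℝ} (hg : Monotone g)
    {l : Filter B} (hl : l.IsApproximateUnit) (hb : l.IsBoundedUnder (· ≤ ·) (‖·‖)) {L : ℝ}
    (hL : Tendsto (fun e => g (e + star e)) l (𝓝 (2 * L))) :
    IsLUB (g '' {x | 0 ≤ x ∧ ‖x‖ < 1}) L := by
  obtain ⟨C, hC⟩ := hb
  have hne : (g '' {x | 0 ≤ x ∧ ‖x‖ < 1}).Nonempty := ⟨g 0, 0, by simp, rfl⟩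
  have hbdd : BddAbove (g '' {x | 0 ≤ x ∧ ‖x‖ < 1}) := by
    refine ⟨‖g‖, ?_⟩
    rintro _ ⟨x, ⟨-, hx1⟩, rfl⟩
    exact (le_abs_self _).trans (g.unit_le_opNorm x hx1.le)
  have hK := isLUB_csSup hne hbdd
  set K := sSup (g '' {x | 0 ≤ x ∧ ‖x‖ < 1})
  have hLK : (2 * L - 2 * K) ^ 2 ≤ 4 * (‖g‖ * (C * C)) * (K - K) := by
    refine closure_minimal (t := {s | (2 * L - 2 * s) ^ 2 ≤ 4 * (‖g‖ * (C * C)) * (K - s)}) ?_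
      (isClosed_le (by fun_prop) (by fun_prop)) (hK.mem_closure hne)
    rintro _ ⟨u, ⟨hu, hu1⟩, rfl⟩
    exact sq_two_mul_sub_map_le_of_isApproximateUnit hg (fun x hx hx1 => hK.1 ⟨x, ⟨hx, hx1⟩, rfl⟩)
      hl (eventually_map.1 hC) hL hu hu1
  have hLK' : L = K := by nlinarith
  rwa [hLK']

end PositiveFunctional

section PositiveMap

variable {B D : Type*} [NonUnitalCStarAlgebra B] [PartialOrder B] [StarOrderedRing B]
  [NonUnitalCStarAlgebra D] [PartialOrder D] [StarOrderedRing D]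
  {P : B →ₚ[ℂ] D} {l : Filter B} {p : D}

lemma isLUB_map_nonneg_ball (hl : l.IsApproximateUnit) (hb : l.IsBoundedUnder (· ≤ ·) (‖·‖))
    (hp : IsSelfAdjoint p) (hP : Tendsto P l (𝓝 p)) {f : D →L[ℝ] ℝ} (hf : Monotone f) :
    IsLUB ((fun a => f (P a)) '' {x | 0 ≤ x ∧ ‖x‖ < 1}) (f p) := by
  let PR : B →L[ℝ] D := ⟨(P : B →ₗ[ℂ] D).restrictScalars ℝ, map_continuous P⟩
  refine isLUB_image_nonneg_ball_of_isApproximateUnit (g := f ∘L PR)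
    (hf.comp (OrderHomClass.mono P)) hl hb ?_
  have hlim := (f.continuous.tendsto _).comp (hP.add hP.star)
  rw [hp.star_eq, map_add, ← two_mul] at hlim
  refine hlim.congr fun e => ?_
  change f (P e + star (P e)) = f (P (e + star e))
  rw [map_add P, map_star P]

lemma map_le_of_tendsto_isApproximateUnit (hl : l.IsApproximateUnit)
    (hb : l.IsBoundedUnder (· ≤ ·) (‖·‖)) (hp : IsSelfAdjoint p) (hP : Tendsto P l (𝓝 p)) {u : B}
    (hu : 0 ≤ u) (hu1 : ‖u‖ ≤ 1) : P u ≤ p := by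
  refine le_of_forall_monotone_le fun f hf => ?_
  exact closure_minimal (fun x hx => (isLUB_map_nonneg_ball hl hb hp hP hf).1 ⟨x, hx, rfl⟩)
    (isClosed_le (f.continuous.comp (map_continuous P)) continuous_const)
    (mem_closure_nonneg_ball hu hu1)

lemma convex_lowerClosure_map_nonneg_ball :
    Convex ℝ {x : D | ∃ u, 0 ≤ u ∧ ‖u‖ < 1 ∧ x ≤ P u} := by
  rintro x ⟨u, hu, hu1, hxu⟩ y ⟨v, hv, hv1, hyv⟩ a b ha hb hab
  refine ⟨a • u + b • v, add_nonneg (smul_nonneg ha hu) (smul_nonneg hb hv), ?_, ?_⟩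
  · simpa using convex_ball (0 : B) 1 (by simpa using hu1) (by simpa using hv1) ha hb hab
  · rw [map_add, P.map_smul_of_tower, P.map_smul_of_tower]
    exact add_le_add (smul_le_smul_of_nonneg_left hxu ha) (smul_le_smul_of_nonneg_left hyv hb)

/-- B noncommutative Dini theorem: weak convergence of the monotone net `P v` improves to norm
convergence because its lower closure is convex. -/
lemma tendsto_approximateUnit_of_isApproximateUnit (hl : l.IsApproximateUnit)
    (hb : l.IsBoundedUnder (· ≤ ·) (‖·‖)) (hp : IsSelfAdjoint p) (hP : Tendsto P l (𝓝 p)) :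
    Tendsto P (CStarAlgebra.approximateUnit B) (𝓝 p) := by
  have hmem : p ∈ closure {x : D | ∃ u, 0 ≤ u ∧ ‖u‖ < 1 ∧ x ≤ P u} := by
    refine mem_closure_of_forall_monotone_le convex_lowerClosure_map_nonneg_ball ?_
      ⟨P 0, 0, le_rfl, by simp, le_rfl⟩ fun f hf s hs => ?_
    · rintro x y hyx ⟨u, hu, hu1, hxu⟩
      exact ⟨u, hu, hu1, hyx.trans hxu⟩
    · refine (isLUB_map_nonneg_ball hl hb hp hP hf).2 ?_
      rintro _ ⟨u, ⟨hu, hu1⟩, rfl⟩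
      exact hs _ ⟨u, hu, hu1, le_rfl⟩
  refine Metric.tendsto_nhds.2 fun ε hε => ?_
  obtain ⟨x, ⟨u, hu, hu1, hxu⟩, hpx⟩ := Metric.mem_closure_iff.1 hmem ε hε
  filter_upwards [eventually_approximateUnit_le hu hu1] with v ⟨huv, hv1⟩
  rw [dist_comm, dist_eq_norm]
  rw [dist_eq_norm] at hpx
  refine (CStarAlgebra.norm_le_norm_of_nonneg_of_le (sub_nonneg.2 ?_) ?_).trans_lt hpx
  · exact map_le_of_tendsto_isApproximateUnit hl hb hp hP (hu.trans huv) hv1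
  · exact sub_le_sub_left (hxu.trans (OrderHomClass.mono P huv)) p

end PositiveMap

section MatrixPositivity

lemma negPart_mul_self_mul_negPart {D : Type*} [NonUnitalCStarAlgebra D] [PartialOrder D] {T : D}
    (hT : IsSelfAdjoint T) :
    T⁻ * T * T⁻ = -(T⁻ * T⁻ * T⁻) := by
  nth_rw 2 [← CFC.posPart_sub_negPart T hT]
  rw [mul_sub, CFC.negPart_mul_posPart, zero_sub, neg_mul]

lemma nonneg_of_negPart_mul_self_mul_negPart_eq_zero {D : Type*} [NonUnitalCStarAlgebra D]
    [PartialOrder D] [StarOrderedRing D] {T : D} (hT : IsSelfAdjoint T)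
    (h : T⁻ * T * T⁻ = 0) : 0 ≤ T := by
  have hN : star T⁻ = T⁻ := (CFC.negPart_nonneg T).star_eq
  have hcube : T⁻ * T⁻ * T⁻ = 0 := by
    rwa [negPart_mul_self_mul_negPart hT, neg_eq_zero] at h
  have hsq : T⁻ * T⁻ = 0 := by
    rw [← CStarRing.star_mul_self_eq_zero_iff, star_mul, hN, ← mul_assoc, hcube, zero_mul]
  rw [← CFC.negPart_eq_zero_iff T hT, ← CStarRing.star_mul_self_eq_zero_iff, hN, hsq]

lemma exists_compression_eq_neg_star_mul_self {D : Type*} [NonUnitalCStarAlgebra D]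
    [PartialOrder D] [StarOrderedRing D] {T : D} (hT : IsSelfAdjoint T) :
    ∃ N Y : D, star N = N ∧ N * T * N = -(star Y * Y) ∧ (Y = 0 → ∃ b, T = star b * b) := by
  have hN : 0 ≤ T⁻ := CFC.negPart_nonneg T
  have hcube : 0 ≤ T⁻ * T⁻ * T⁻ := by
    simpa only [hN.star_eq] using star_left_conjugate_nonneg hN T⁻
  obtain ⟨Y, hY⟩ := CStarAlgebra.nonneg_iff_eq_star_mul_self.1 hcube
  have hNTN : T⁻ * T * T⁻ = -(star Y * Y) := by rw [negPart_mul_self_mul_negPart hT, hY]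
  refine ⟨T⁻, Y, hN.star_eq, hNTN, fun hY0 => CStarAlgebra.nonneg_iff_eq_star_mul_self.1 ?_⟩
  refine nonneg_of_negPart_mul_self_mul_negPart_eq_zero hT ?_
  rw [hNTN, hY0, mul_zero, neg_zero]

variable {B : Type*} [NonUnitalCStarAlgebra B] [PartialOrder B] [StarOrderedRing B]

lemma eq_zero_of_sum_star_mul_self_nonpos {ι : Type*} [Fintype ι] {y : ι → B}
    (h : ∑ k, star (y k) * y k ≤ 0) (k : ι) : y k = 0 := by
  have hnonneg (k : ι) (_ : k ∈ Finset.univ) : 0 ≤ star (y k) * y k := star_mul_self_nonneg _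
  rw [← CStarRing.star_mul_self_eq_zero_iff]
  exact (Finset.sum_eq_zero_iff_of_nonneg hnonneg).1 (h.antisymm (Finset.sum_nonneg hnonneg)) k
    (Finset.mem_univ k)

lemma cstarMatrix_eq_zero_of_diag_star_mul_self_nonpos {ι : Type*} [Fintype ι]
    {Y : CStarMatrix ι ι B} (hdiag : ∀ j, (star Y * Y) j j ≤ 0) : Y = 0 := by
  ext k j
  refine eq_zero_of_sum_star_mul_self_nonpos (y := fun k => Y k j) ?_ k
  simpa [CStarMatrix.mul_apply, CStarMatrix.star_apply] using hdiag j

end MatrixPositivity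

section MatPos

variable {B : Type} [NonUnitalCStarAlgebra B] [PartialOrder B] [StarOrderedRing B]

lemma isPosElem_iff_nonneg {x : B} : IsPosElem x ↔ 0 ≤ x :=
  CStarAlgebra.nonneg_iff_eq_star_mul_self.symm

lemma matPos_of_forall_sum_nonneg {n : ℕ} (M : Fin n → Fin n → B)
    (hstar : ∀ i j, star (M i j) = M j i)
    (hM : ∀ α : Fin n → B, 0 ≤ ∑ i, ∑ j, star (α i) * M i j * α j) : MatPos M := by
  let T : CStarMatrix (Fin n) (Fin n) B := CStarMatrix.ofMatrix (Matrix.of M)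
  have hT : IsSelfAdjoint T := by
    ext i j
    exact hstar j i
  obtain ⟨N, Y, hN, hNTN, hY⟩ := exists_compression_eq_neg_star_mul_self hT
  -- The diagonal of `N * T * N` lists the values of the quadratic form at the columns of `N`.
  have hdiag (j : Fin n) : 0 ≤ (N * T * N) j j := by
    have hcol (i : Fin n) : star (N i j) = N j i := congr_fun (congr_fun hN j) i
    convert hM fun i => N i j using 1
    simp only [CStarMatrix.mul_apply, Finset.sum_mul, hcol]
    exact Finset.sum_comm
  have hY0 : Y = 0 := cstarMatrix_eq_zero_of_diag_star_mul_self_nonpos fun j =>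
    neg_nonneg.1 ((hdiag j).trans_eq (congr_fun (congr_fun hNTN j) j))
  obtain ⟨b, hb⟩ := hY hY0
  refine ⟨n, fun k i => b k i, fun i j => ?_⟩
  have hij := congr_fun (congr_fun hb i) j
  rwa [CStarMatrix.mul_apply] at hij

end MatPos

section Multiplier

lemma eq_of_forall_mul_left_eq {B : Type*} [NonUnitalNormedRing B] [StarRing B] [CStarRing B]
    {x y : B} (h : ∀ c : B, c * x = c * y) : x = y := by
  rw [← sub_eq_zero, ← CStarRing.star_mul_self_eq_zero_iff, mul_sub, h, sub_self]

lemma eq_of_forall_mul_right_eq {B : Type*} [NonUnitalNormedRing B] [StarRing B] [CStarRing B]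
    {x y : B} (h : ∀ c : B, x * c = y * c) : x = y := by
  rw [← sub_eq_zero, ← CStarRing.mul_star_self_eq_zero_iff, sub_mul, h, sub_self]

variable {𝕜 B : Type*} [NontriviallyNormedField 𝕜] [NonUnitalNormedRing B] [NormedSpace 𝕜 B]
  [SMulCommClass 𝕜 B B] [IsScalarTower 𝕜 B B] [StarRing B] [CStarRing B]

lemma doubleCentralizer_fst_mul (m : 𝓜(𝕜, B)) (a b : B) : m.fst (a * b) = m.fst a * b :=
  eq_of_forall_mul_left_eq fun c => by rw [← m.central, ← mul_assoc, m.central, mul_assoc]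

lemma doubleCentralizer_snd_mul (m : 𝓜(𝕜, B)) (a b : B) : m.snd (a * b) = a * m.snd b :=
  eq_of_forall_mul_right_eq fun c => by rw [m.central, mul_assoc, mul_assoc, m.central]

lemma doubleCentralizer_mul_coe (m : 𝓜(𝕜, B)) (a : B) :
    m * (a : 𝓜(𝕜, B)) = (m.fst a : B) := by
  refine DoubleCentralizer.ext 𝕜 B _ _ (Prod.ext ?_ ?_) <;> ext b
  · simp [doubleCentralizer_fst_mul]
  · simp [m.central]

lemma doubleCentralizer_coe_mul (m : 𝓜(𝕜, B)) (a : B) :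
    (a : 𝓜(𝕜, B)) * m = (m.snd a : B) := by
  refine DoubleCentralizer.ext 𝕜 B _ _ (Prod.ext ?_ ?_) <;> ext b
  · simp [m.central]
  · simp [doubleCentralizer_snd_mul]

lemma doubleCentralizer_norm_fst_apply_le (m : 𝓜(𝕜, B)) {u : B} (hu : ‖u‖ ≤ 1) :
    ‖m.fst u‖ ≤ ‖m‖ :=
  (m.fst.unit_le_opNorm u hu).trans_eq m.norm_fst

lemma doubleCentralizer_norm_snd_apply_le (m : 𝓜(𝕜, B)) {u : B} (hu : ‖u‖ ≤ 1) :
    ‖m.snd u‖ ≤ ‖m‖ :=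
  (m.snd.unit_le_opNorm u hu).trans_eq m.norm_snd

lemma doubleCentralizer_norm_one_le : ‖(1 : 𝓜(𝕜, B))‖ ≤ 1 := by
  rw [← DoubleCentralizer.norm_fst]
  exact ContinuousLinearMap.norm_id_le

lemma doubleCentralizer_norm_coe [RegularNormedAlgebra 𝕜 B] (a : B) : ‖(a : 𝓜(𝕜, B))‖ = ‖a‖ := by
  rw [← DoubleCentralizer.norm_fst, DoubleCentralizer.coe_fst,
    ContinuousLinearMap.opNorm_mul_apply]

lemma doubleCentralizer_isometry_coe [RegularNormedAlgebra 𝕜 B] :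
    Isometry (fun a : B => (a : 𝓜(𝕜, B))) := by
  refine Isometry.of_dist_eq fun a b => ?_
  rw [dist_eq_norm, dist_eq_norm, ← doubleCentralizer_norm_coe (𝕜 := 𝕜) (a - b)]
  congr 1
  refine DoubleCentralizer.ext 𝕜 B _ _ (Prod.ext ?_ ?_) <;> ext c <;> simp

end Multiplier

namespace CStarAction

variable (S : CStarAction 𝔄 A)

lemma star_act (a : A) (α : 𝔄) : star (S.act a α) = S.lact (star α) (star a) := by
  simp [lact]

lemma lact_mul (hbi : S.Biaction) (α : 𝔄) (a b : A) : S.lact α (a * b) = S.lact α a * b :=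
  doubleCentralizer_fst_mul (S.iotaM hbi α) a b

lemma iotaM_mul (hbi : S.Biaction) (α β : 𝔄) :
    S.iotaM hbi (α * β) = S.iotaM hbi α * S.iotaM hbi β := by
  refine DoubleCentralizer.ext ℂ A _ _ (Prod.ext ?_ ?_) <;> ext b
  · change S.lact (α * β) b = S.lact α (S.lact β b)
    simp [lact, S.act_mul]
  · exact S.act_mul b α β

lemma iotaM_star (hbi : S.Biaction) (α : 𝔄) :
    S.iotaM hbi (star α) = star (S.iotaM hbi α) := by
  refine DoubleCentralizer.ext ℂ A _ _ (Prod.ext ?_ ?_) <;> ext b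
  · rw [DoubleCentralizer.star_fst]
    change S.lact (star α) b = star (S.act (star b) α)
    rw [star_act, star_star]
  · rw [DoubleCentralizer.star_snd]
    change S.act b (star α) = star (S.lact α (star b))
    simp [lact]

lemma coe_act (hbi : S.Biaction) (a : A) (α : 𝔄) :
    ((S.act a α : A) : 𝓜(ℂ, A)) = a * S.iotaM hbi α :=
  (doubleCentralizer_coe_mul (S.iotaM hbi α) a).symm

end CStarAction

section UnitalModuleMap

lemma IsRetraction.eq_zero_of_forall_mul_eq_zero {S : CStarAction 𝔄 A} {τ : A → 𝔄}
    (h : IsRetraction S τ) {β : 𝔄} (hβ : ∀ a, τ a * β = 0) : β = 0 := by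
  rw [← CStarRing.star_mul_self_eq_zero_iff, ← norm_le_zero_iff]
  refine le_of_forall_pos_le_add fun ε hε => ?_
  obtain ⟨a, ha⟩ := h.strict_dense (star β) ε hε {β}
  have := ha β (Finset.mem_singleton_self β)
  rw [h.map_act, hβ, zero_sub, norm_neg] at this
  simpa using this.le

variable [PartialOrder 𝔄] [StarOrderedRing 𝔄] [PartialOrder A] [StarOrderedRing A]

/-- A positive right `𝔄`-module map `T : A → 𝔄` whose values along the canonical approximate unit
of `A` converge in norm to a unit `p` of `𝔄`. Every `𝔄`-retraction has this form. -/
structure IsUnitalModuleMap (S : CStarAction 𝔄 A) (T : A →ₚ[ℂ] 𝔄) (p : 𝔄) : Prop where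
  map_act : ∀ a α, T (S.act a α) = T a * α
  unit_mul : ∀ α, p * α = α
  mul_unit : ∀ α, α * p = α
  tendsto : Tendsto T (CStarAlgebra.approximateUnit A) (𝓝 p)

/-- Conjugation `x ↦ star β * x * β` as a positive linear map; it turns strict convergence into
norm convergence. -/
def conjPositiveLinearMap {B : Type*} [NonUnitalCStarAlgebra B] [PartialOrder B]
    [StarOrderedRing B] (β : B) : B →ₚ[ℂ] B :=
  PositiveLinearMap.mk₀ (LinearMap.mulLeftRight ℂ (star β, β)) fun _ hx =>
    star_left_conjugate_nonneg hx β

lemma mul_eq_zero_of_conjugate_eq_zero {B : Type*} [NonUnitalCStarAlgebra B] [PartialOrder B]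
    [StarOrderedRing B] {x β : B} (hx : 0 ≤ x) (h : star β * x * β = 0) : x * β = 0 := by
  obtain ⟨c, rfl⟩ := CStarAlgebra.nonneg_iff_eq_star_mul_self.1 hx
  have hcβ : c * β = 0 := by
    rw [← CStarRing.star_mul_self_eq_zero_iff, star_mul, ← mul_assoc, mul_assoc (star β), h]
  rw [mul_assoc, hcβ, mul_zero]

lemma map_mul_eq_zero_of_isApproximateUnit {B D : Type*} [NonUnitalCStarAlgebra B]
    [PartialOrder B] [StarOrderedRing B] [NonUnitalCStarAlgebra D] [PartialOrder D]
    [StarOrderedRing D] {T : B →ₚ[ℂ] D} {l : Filter B} (hl : l.IsApproximateUnit)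
    (hb : l.IsBoundedUnder (· ≤ ·) (‖·‖)) {β : D} (hβ : Tendsto (fun e => T e * β) l (𝓝 0))
    (a : B) : T a * β = 0 := by
  have hconj : Tendsto ((conjPositiveLinearMap β).comp T) l (𝓝 0) := by
    have h := hβ.const_mul (star β)
    rw [mul_zero] at h
    exact h.congr fun e => (mul_assoc _ _ _).symm
  have hspan : Submodule.span ℂ ({x : B | 0 ≤ x} ∩ Metric.ball 0 1) ≤
      LinearMap.ker (LinearMap.mulRight ℂ β ∘ₗ (T : B →ₗ[ℂ] D)) := by
    refine Submodule.span_le.2 fun u hu => ?_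
    have hu1 : ‖u‖ < 1 := by simpa using hu.2
    exact mul_eq_zero_of_conjugate_eq_zero (T.map_nonneg hu.1) <| le_antisymm
      (map_le_of_tendsto_isApproximateUnit hl hb (IsSelfAdjoint.zero D) hconj hu.1 hu1.le)
      (star_left_conjugate_nonneg (T.map_nonneg hu.1) β)
  rw [CStarAlgebra.span_nonneg_inter_unitBall] at hspan
  exact hspan Submodule.mem_top

lemma IsRetraction.exists_positiveLinearMap {S : CStarAction 𝔄 A} {τ : A → 𝔄}
    (h : IsRetraction S τ) : ∃ T : A →ₚ[ℂ] 𝔄, ⇑T = τ := by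
  let f : A →ₗ[ℂ] 𝔄 := { toFun := τ, map_add' := h.map_add, map_smul' := h.map_smulC }
  refine ⟨PositiveLinearMap.mk₀ f fun x hx => ?_, rfl⟩
  obtain ⟨b, rfl⟩ := CStarAlgebra.nonneg_iff_eq_star_mul_self.1 hx
  exact isPosElem_iff_nonneg.1 (h.pos b)

lemma IsRetraction.exists_isUnitalModuleMap {S : CStarAction 𝔄 A} {T : A →ₚ[ℂ] 𝔄}
    (h : IsRetraction S T) : ∃ p, IsUnitalModuleMap S T p := by
  obtain ⟨l, p, hne, ⟨C, hC⟩, hright, hleft, hp, hpp, hTp, -⟩ := h.bai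
  have hl : l.IsApproximateUnit :=
    { tendsto_mul_left := hleft, tendsto_mul_right := hright, neBot := hne }
  have hb : l.IsBoundedUnder (· ≤ ·) (‖·‖) := ⟨C, eventually_map.2 hC⟩
  have hunit (α : 𝔄) : p * α = α := by
    refine (sub_eq_zero.1 (h.eq_zero_of_forall_mul_eq_zero
      (map_mul_eq_zero_of_isApproximateUnit hl hb ?_))).symm
    have := hTp (α - p * α)
    rwa [mul_sub, ← mul_assoc, hpp, sub_self] at this
  have hunit' (α : 𝔄) : α * p = α := by
    have := congr_arg star (hunit (star α))
    rwa [star_mul, star_star, hp] at this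
  have hlim : Tendsto T l (𝓝 p) := by simpa only [hunit'] using hTp p
  exact ⟨p, h.map_act, hunit, hunit', tendsto_approximateUnit_of_isApproximateUnit hl hb hp hlim⟩

end UnitalModuleMap

lemma isSelfAdjoint_of_forall_mul_eq_self {R : Type*} [Mul R] [StarMul R] {p : R}
    (h : ∀ x, x * p = x) : IsSelfAdjoint p := by
  have hpp : star p * p = p := by rw [← star_inj, star_mul, star_star, h]
  rw [← hpp]
  exact .star_mul_self p

lemma norm_le_one_of_forall_mul_eq_self {R : Type*} [NonUnitalNormedRing R] [StarRing R]
    [CStarRing R] {p : R} (h : ∀ x, x * p = x) : ‖p‖ ≤ 1 := by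
  have hpp : ‖p‖ * ‖p‖ = ‖p‖ := by
    rw [← CStarRing.norm_star_mul_self, (isSelfAdjoint_of_forall_mul_eq_self h).star_eq, h]
  nlinarith [norm_nonneg p]

namespace IsUnitalModuleMap

variable [PartialOrder 𝔄] [StarOrderedRing 𝔄] [PartialOrder A] [StarOrderedRing A]
  {S : CStarAction 𝔄 A} {T : A →ₚ[ℂ] 𝔄} {p : 𝔄}

lemma map_le_unit (h : IsUnitalModuleMap S T p) {u : A} (hu : 0 ≤ u) (hu1 : ‖u‖ ≤ 1) :
    T u ≤ p := by
  have hau := CStarAlgebra.increasingApproximateUnit A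
  exact map_le_of_tendsto_isApproximateUnit hau.toIsApproximateUnit
    ⟨1, eventually_map.2 hau.eventually_norm⟩ (isSelfAdjoint_of_forall_mul_eq_self h.mul_unit)
    h.tendsto hu hu1

lemma norm_map_le_of_nonneg (h : IsUnitalModuleMap S T p) {a : A} (ha : 0 ≤ a) :
    ‖T a‖ ≤ ‖a‖ := by
  rcases eq_or_ne a 0 with rfl | ha0
  · simp
  have hpos : 0 < ‖a‖ := norm_pos_iff.2 ha0
  have hna : 0 ≤ (‖a‖⁻¹ : ℝ) • a := smul_nonneg (by positivity) ha
  have hna1 : ‖(‖a‖⁻¹ : ℝ) • a‖ ≤ 1 := by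
    rw [norm_smul, norm_inv, norm_norm, inv_mul_cancel₀ hpos.ne']
  have hT : ‖T ((‖a‖⁻¹ : ℝ) • a)‖ ≤ 1 :=
    (CStarAlgebra.norm_le_norm_of_nonneg_of_le (T.map_nonneg hna)
      (h.map_le_unit hna hna1)).trans
      (norm_le_one_of_forall_mul_eq_self h.mul_unit)
  rwa [T.map_smul_of_tower, norm_smul, norm_inv, norm_norm, inv_mul_le_iff₀ hpos, mul_one] at hT

lemma map_lact (h : IsUnitalModuleMap S T p) (α : 𝔄) (a : A) : T (S.lact α a) = α * T a := by
  rw [CStarAction.lact, map_star, h.map_act, map_star, star_mul, star_star, star_star]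

lemma map_star_act_mul (h : IsUnitalModuleMap S T p) (hbi : S.Biaction) (y : A) (β : 𝔄) (x : A) :
    T (star (S.act y β) * x) = star β * T (star y * x) := by
  rw [S.star_act, ← S.lact_mul hbi, h.map_lact]

lemma star_mul_self_map_star_mul_le (h : IsUnitalModuleMap S T p) (hbi : S.Biaction) {y z : A}
    {c : ℝ} (hc : 0 < c) (hy : ‖T (star y * y)‖ ≤ c) :
    star (T (star y * z)) * T (star y * z) ≤ c • T (star z * z) := by
  set β := T (star y * z) with hβ
  have hβ' : T (star z * y) = star β := by rw [hβ, ← map_star, star_mul, star_star]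
  have hyy : star β * T (star y * y) * β ≤ c • (star β * β) :=
    (CStarAlgebra.star_left_conjugate_le_norm_smul
      (T.map_nonneg (star_mul_self_nonneg y)).isSelfAdjoint).trans
      (smul_le_smul_of_nonneg_right hy (star_mul_self_nonneg β))
  have hexpand : T (star (S.act y β - c • z) * (S.act y β - c • z)) =
      star β * T (star y * y) * β - c • (star β * β) - c • (star β * β - c • T (star z * z)) := by
    simp only [star_sub, star_smul, star_trivial, sub_mul, mul_sub, map_sub, smul_mul_assoc,
      mul_smul_comm, T.map_smul_of_tower, h.map_star_act_mul hbi, ← S.mul_act, h.map_act, hβ',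
      ← hβ, smul_sub, mul_assoc]
  have hnonneg := T.map_nonneg (star_mul_self_nonneg (S.act y β - c • z))
  rw [hexpand, sub_nonneg] at hnonneg
  have hle := smul_le_smul_of_nonneg_left (hnonneg.trans (sub_nonpos.2 hyy)) (inv_nonneg.2 hc.le)
  rwa [smul_zero, smul_smul, inv_mul_cancel₀ hc.ne', one_smul, sub_nonpos] at hle

lemma norm_map_star_mul_sq_le (h : IsUnitalModuleMap S T p) (hbi : S.Biaction) (y z : A) :
    ‖T (star y * z)‖ ^ 2 ≤ ‖T (star y * y)‖ * ‖T (star z * z)‖ := by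
  refine ge_of_tendsto (x := 𝓝[>] ‖T (star y * y)‖)
    (((tendsto_id.mono_left nhdsWithin_le_nhds).mul_const _)) ?_
  filter_upwards [self_mem_nhdsWithin] with c hyc
  have hc : 0 < c := (norm_nonneg _).trans_lt hyc
  have hle := CStarAlgebra.norm_le_norm_of_nonneg_of_le (star_mul_self_nonneg _)
    (h.star_mul_self_map_star_mul_le hbi (z := z) hc (le_of_lt hyc))
  rwa [CStarRing.norm_star_mul_self, norm_smul, Real.norm_of_nonneg hc.le, ← sq] at hle

lemma norm_map_mul_sq_le (h : IsUnitalModuleMap S T p) (hbi : S.Biaction) (x z : A) :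
    ‖T (x * z)‖ ^ 2 ≤ ‖x‖ ^ 2 * ‖T (star z * z)‖ := by
  have hx : ‖T (x * star x)‖ ≤ ‖x‖ ^ 2 := by
    rw [sq, ← CStarRing.norm_self_mul_star]
    exact h.norm_map_le_of_nonneg (mul_star_self_nonneg x)
  have hcs := h.norm_map_star_mul_sq_le hbi (star x) z
  rw [star_star] at hcs
  exact hcs.trans (by gcongr)

lemma norm_map_le (h : IsUnitalModuleMap S T p) (hbi : S.Biaction) (x : A) : ‖T x‖ ≤ ‖x‖ := by
  have hau := CStarAlgebra.increasingApproximateUnit A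
  have hne := hau.neBot
  have hlim : Tendsto (fun v => ‖T (v * x)‖) (CStarAlgebra.approximateUnit A) (𝓝 ‖T x‖) :=
    ((map_continuous T).norm.tendsto _).comp (hau.tendsto_mul_right x)
  refine le_of_tendsto hlim ?_
  filter_upwards [hau.eventually_norm] with v hv
  refine le_of_sq_le_sq ?_ (norm_nonneg x)
  calc ‖T (v * x)‖ ^ 2 ≤ ‖v‖ ^ 2 * ‖T (star x * x)‖ := h.norm_map_mul_sq_le hbi v x
    _ ≤ 1 * ‖star x * x‖ := by
      gcongr
      exacts [pow_le_one₀ (norm_nonneg v) hv, h.norm_map_le_of_nonneg (star_mul_self_nonneg x)]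
    _ = ‖x‖ ^ 2 := by rw [one_mul, CStarRing.norm_star_mul_self, sq]

lemma map_sq_sub_le (h : IsUnitalModuleMap S T p) {u v : A} (hu : 0 ≤ u) (hu1 : ‖u‖ ≤ 1)
    (hv : 0 ≤ v) (hv1 : ‖v‖ ≤ 1) :
    T ((v - u) * (v - u)) ≤ p - T (v * u) - T (u * v) + T u := by
  have hmono {w : A} (hw : 0 ≤ w) (hw1 : ‖w‖ ≤ 1) : T (w * w) ≤ T w :=
    OrderHomClass.mono T (mul_self_le_self_of_norm_le_one hw hw1)
  calc T ((v - u) * (v - u)) = T (v * v) - T (v * u) - T (u * v) + T (u * u) := by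
        simp only [sub_mul, mul_sub, map_sub]
        abel
    _ ≤ p - T (v * u) - T (u * v) + T u := by
        refine add_le_add (sub_le_sub_right (sub_le_sub_right ?_ _) _) (hmono hu hu1)
        exact (hmono hv hv1).trans (h.map_le_unit hv hv1)

lemma norm_map_sub_map_mul_le (h : IsUnitalModuleMap S T p) (hbi : S.Biaction) {u : A}
    (hu : 0 ≤ u) (hu1 : ‖u‖ ≤ 1) (x : A) :
    ‖T x - T (x * u)‖ ≤ ‖x‖ * √‖p - T u‖ := by
  have hau := CStarAlgebra.increasingApproximateUnit A
  have hne := hau.neBot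
  have hlim : Tendsto (fun v => ‖T (x * v) - T (x * u)‖ ^ 2) (CStarAlgebra.approximateUnit A)
      (𝓝 (‖T x - T (x * u)‖ ^ 2)) :=
    ((((map_continuous T).tendsto _).comp (hau.tendsto_mul_left x)).sub_const _).norm.pow 2
  have hlim' : Tendsto (fun v => ‖x‖ ^ 2 * ‖p - T (v * u) - T (u * v) + T u‖)
      (CStarAlgebra.approximateUnit A) (𝓝 (‖x‖ ^ 2 * ‖p - T u - T u + T u‖)) :=
    (((((map_continuous T).tendsto _).comp (hau.tendsto_mul_right u)).const_sub p |>.sub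
      (((map_continuous T).tendsto _).comp (hau.tendsto_mul_left u))).add_const _).norm.const_mul _
  rw [sub_add_cancel] at hlim'
  refine le_of_sq_le_sq ?_ (by positivity)
  rw [mul_pow, Real.sq_sqrt (norm_nonneg _)]
  refine le_of_tendsto_of_tendsto hlim hlim' ?_
  filter_upwards [hau.eventually_nonneg, hau.eventually_norm] with v hv hv1
  have hvu : star (v - u) = v - u := (hv.isSelfAdjoint.sub hu.isSelfAdjoint).star_eq
  have hnonneg : 0 ≤ (v - u) * (v - u) := by simpa only [hvu] using star_mul_self_nonneg (v - u)
  have hcs := h.norm_map_mul_sq_le hbi x (v - u)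
  rw [hvu, mul_sub, map_sub] at hcs
  refine hcs.trans (mul_le_mul_of_nonneg_left ?_ (by positivity))
  exact CStarAlgebra.norm_le_norm_of_nonneg_of_le (T.map_nonneg hnonneg)
    (h.map_sq_sub_le hu hu1 hv hv1)

lemma norm_map_sub_mul_map_le (h : IsUnitalModuleMap S T p) (hbi : S.Biaction) {u : A}
    (hu : 0 ≤ u) (hu1 : ‖u‖ ≤ 1) (x : A) :
    ‖T x - T (u * x)‖ ≤ ‖x‖ * √‖p - T u‖ := by
  have hle := h.norm_map_sub_map_mul_le hbi hu hu1 (star x)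
  rwa [← map_sub, ← norm_star, ← map_star, norm_star, star_sub, star_mul, star_star, hu.star_eq,
    map_sub] at hle

lemma norm_map_fst_sub_map_snd_le (h : IsUnitalModuleMap S T p) (hbi : S.Biaction) {u v : A}
    (hu : 0 ≤ u) (hu1 : ‖u‖ ≤ 1) (hv : 0 ≤ v) (hv1 : ‖v‖ ≤ 1) (m : 𝓜(ℂ, A)) :
    ‖T (m.fst u) - T (m.snd v)‖ ≤ ‖m‖ * √‖p - T u‖ + ‖m‖ * √‖p - T v‖ := by
  have hsplit : T (m.fst u) - T (m.snd v) =
      (T (m.fst u) - T (v * m.fst u)) - (T (m.snd v) - T (m.snd v * u)) := by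
    rw [m.central, sub_sub_sub_cancel_right]
  calc ‖T (m.fst u) - T (m.snd v)‖
      ≤ ‖T (m.fst u) - T (v * m.fst u)‖ + ‖T (m.snd v) - T (m.snd v * u)‖ :=
        hsplit ▸ norm_sub_le _ _
    _ ≤ ‖m.fst u‖ * √‖p - T v‖ + ‖m.snd v‖ * √‖p - T u‖ :=
        add_le_add (h.norm_map_sub_mul_map_le hbi hv hv1 _)
          (h.norm_map_sub_map_mul_le hbi hu hu1 _)
    _ ≤ ‖m‖ * √‖p - T v‖ + ‖m‖ * √‖p - T u‖ := by
        gcongr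
        exacts [doubleCentralizer_norm_fst_apply_le m hu1,
          doubleCentralizer_norm_snd_apply_le m hv1]
    _ = ‖m‖ * √‖p - T u‖ + ‖m‖ * √‖p - T v‖ := add_comm _ _

end IsUnitalModuleMap

section MultiplierExtension

lemma exists_tendsto_of_dist_le {X E : Type*} [PseudoMetricSpace E] [CompleteSpace E]
    {l : Filter X} [l.NeBot] {f g : X → E} {c : X → ℝ}
    (h : ∀ᶠ z in l ×ˢ l, dist (f z.1) (g z.2) ≤ c z.1 + c z.2) (hc : Tendsto c l (𝓝 0)) :
    ∃ t, Tendsto f l (𝓝 t) ∧ Tendsto g l (𝓝 t) := by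
  have hdiag : ∀ᶠ x in l, dist (f x) (g x) ≤ c x + c x := h.diag_of_prod
  have hf : Tendsto (fun z : X × X => (f z.1, f z.2)) (l ×ˢ l) (uniformity E) := by
    refine tendsto_uniformity_iff_dist_tendsto_zero.2 ?_
    have hbound := ((hc.comp tendsto_fst).add (hc.comp tendsto_snd)).add
      ((hc.comp tendsto_snd).add (hc.comp (tendsto_snd (f := l) (g := l))))
    simp only [add_zero] at hbound
    refine squeeze_zero' (.of_forall fun _ => dist_nonneg) ?_ hbound
    filter_upwards [h, tendsto_snd.eventually hdiag] with z hz hz2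
    exact (dist_triangle_right _ _ _).trans (add_le_add hz hz2)
  obtain ⟨t, ht⟩ := cauchy_map_iff_exists_tendsto.1 (cauchy_map_iff'.2 hf)
  refine ⟨t, ht, tendsto_of_tendsto_of_dist ht ?_⟩
  refine squeeze_zero' (.of_forall fun _ => dist_nonneg) hdiag ?_
  simpa only [add_zero] using hc.add hc

namespace IsUnitalModuleMap

variable [PartialOrder 𝔄] [PartialOrder A] [StarOrderedRing A]
  {S : CStarAction 𝔄 A} {T : A →ₚ[ℂ] 𝔄} {p : 𝔄}

lemma tendsto_sqrt_norm_unit_sub (h : IsUnitalModuleMap S T p) (c : ℝ) :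
    Tendsto (fun u => c * √‖p - T u‖) (CStarAlgebra.approximateUnit A) (𝓝 0) := by
  simpa using ((h.tendsto.const_sub p).norm.sqrt).const_mul c

variable [StarOrderedRing 𝔄]

lemma exists_tendsto (h : IsUnitalModuleMap S T p) (hbi : S.Biaction) (m : 𝓜(ℂ, A)) :
    ∃ t, Tendsto (fun u => T (m.fst u)) (CStarAlgebra.approximateUnit A) (𝓝 t) ∧
      Tendsto (fun u => T (m.snd u)) (CStarAlgebra.approximateUnit A) (𝓝 t) := by
  have hau := CStarAlgebra.increasingApproximateUnit A
  have hne := hau.neBot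
  have hball := hau.eventually_nonneg.and hau.eventually_norm
  refine exists_tendsto_of_dist_le ?_ (h.tendsto_sqrt_norm_unit_sub ‖m‖)
  filter_upwards [hball.prod_mk hball] with z ⟨hu, hv⟩
  rw [dist_eq_norm]
  exact h.norm_map_fst_sub_map_snd_le hbi hu.1 hu.2 hv.1 hv.2 m

/-- The extension of a unital module map `T : A → 𝔄` to `M(A)`: the common limit of `T (m u)` and
`T (u m)` as `u` runs through the canonical approximate unit of `A`. -/
def extension (h : IsUnitalModuleMap S T p) (hbi : S.Biaction) : 𝓜(ℂ, A) →ₗ[ℂ] 𝔄 where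
  toFun m := (h.exists_tendsto hbi m).choose
  map_add' x y := by
    have hne := (CStarAlgebra.increasingApproximateUnit A).neBot
    refine tendsto_nhds_unique (h.exists_tendsto hbi (x + y)).choose_spec.1
      (((h.exists_tendsto hbi x).choose_spec.1.add
        (h.exists_tendsto hbi y).choose_spec.1).congr fun u => ?_)
    exact (map_add T _ _).symm
  map_smul' c x := by
    have hne := (CStarAlgebra.increasingApproximateUnit A).neBot
    refine tendsto_nhds_unique (h.exists_tendsto hbi (c • x)).choose_spec.1
      (((h.exists_tendsto hbi x).choose_spec.1.const_smul c).congr fun u => ?_)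
    exact (map_smul T _ _).symm

lemma tendsto_map_fst (h : IsUnitalModuleMap S T p) (hbi : S.Biaction) (m : 𝓜(ℂ, A)) :
    Tendsto (fun u => T (m.fst u)) (CStarAlgebra.approximateUnit A) (𝓝 (h.extension hbi m)) :=
  (h.exists_tendsto hbi m).choose_spec.1

lemma tendsto_map_snd (h : IsUnitalModuleMap S T p) (hbi : S.Biaction) (m : 𝓜(ℂ, A)) :
    Tendsto (fun u => T (m.snd u)) (CStarAlgebra.approximateUnit A) (𝓝 (h.extension hbi m)) :=
  (h.exists_tendsto hbi m).choose_spec.2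

lemma norm_map_fst_sub_extension_le (h : IsUnitalModuleMap S T p) (hbi : S.Biaction) {u : A}
    (hu : 0 ≤ u) (hu1 : ‖u‖ ≤ 1) (m : 𝓜(ℂ, A)) :
    ‖T (m.fst u) - h.extension hbi m‖ ≤ ‖m‖ * √‖p - T u‖ := by
  have hau := CStarAlgebra.increasingApproximateUnit A
  have hne := hau.neBot
  have hbound := (h.tendsto_sqrt_norm_unit_sub ‖m‖).const_add (‖m‖ * √‖p - T u‖)
  rw [add_zero] at hbound
  refine le_of_tendsto_of_tendsto ((h.tendsto_map_snd hbi m).const_sub _).norm hbound ?_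
  filter_upwards [hau.eventually_nonneg, hau.eventually_norm] with v hv hv1
  exact h.norm_map_fst_sub_map_snd_le hbi hu hu1 hv hv1 m

lemma extension_coe (h : IsUnitalModuleMap S T p) (hbi : S.Biaction) (a : A) :
    h.extension hbi (a : 𝓜(ℂ, A)) = T a := by
  have hau := CStarAlgebra.increasingApproximateUnit A
  have hne := hau.neBot
  exact tendsto_nhds_unique (h.tendsto_map_fst hbi a)
    (((map_continuous T).tendsto _).comp (hau.tendsto_mul_left a))

lemma extension_star (h : IsUnitalModuleMap S T p) (hbi : S.Biaction) (m : 𝓜(ℂ, A)) :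
    h.extension hbi (star m) = star (h.extension hbi m) := by
  have hau := CStarAlgebra.increasingApproximateUnit A
  have hne := hau.neBot
  refine tendsto_nhds_unique (h.tendsto_map_fst hbi (star m))
    ((h.tendsto_map_snd hbi m).star.congr' ?_)
  filter_upwards [hau.eventually_star_eq] with u hu
  rw [← map_star, DoubleCentralizer.star_fst, hu]

lemma norm_extension_le (h : IsUnitalModuleMap S T p) (hbi : S.Biaction) (m : 𝓜(ℂ, A)) :
    ‖h.extension hbi m‖ ≤ ‖m‖ := by
  have hau := CStarAlgebra.increasingApproximateUnit A
  have hne := hau.neBot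
  refine le_of_tendsto (h.tendsto_map_fst hbi m).norm (hau.eventually_norm.mono fun u hu => ?_)
  exact (h.norm_map_le hbi _).trans (doubleCentralizer_norm_fst_apply_le m hu)

lemma extension_mul_iotaM (h : IsUnitalModuleMap S T p) (hbi : S.Biaction) (m : 𝓜(ℂ, A))
    (α : 𝔄) : h.extension hbi (m * S.iotaM hbi α) = h.extension hbi m * α := by
  have hne := (CStarAlgebra.increasingApproximateUnit A).neBot
  exact tendsto_nhds_unique (h.tendsto_map_snd hbi _)
    (((h.tendsto_map_snd hbi m).mul_const α).congr fun u => (h.map_act (m.snd u) α).symm)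

lemma extension_iotaM_mul (h : IsUnitalModuleMap S T p) (hbi : S.Biaction) (m : 𝓜(ℂ, A))
    (α : 𝔄) : h.extension hbi (S.iotaM hbi α * m) = α * h.extension hbi m := by
  rw [← star_inj, ← extension_star, star_mul, ← S.iotaM_star, extension_mul_iotaM,
    extension_star, star_mul]

lemma extension_iotaM (h : IsUnitalModuleMap S T p) (hbi : S.Biaction) (α : 𝔄) :
    h.extension hbi (S.iotaM hbi α) = α := by
  have hne := (CStarAlgebra.increasingApproximateUnit A).neBot
  have hlim := h.tendsto.mul_const α
  rw [h.unit_mul] at hlim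
  exact tendsto_nhds_unique (h.tendsto_map_snd hbi _)
    (hlim.congr fun u => (h.map_act u α).symm)

lemma extension_star_mul_self_nonneg (h : IsUnitalModuleMap S T p) (hbi : S.Biaction)
    (m : 𝓜(ℂ, A)) : 0 ≤ h.extension hbi (star m * m) := by
  have hau := CStarAlgebra.increasingApproximateUnit A
  have hne := hau.neBot
  have hlim : Tendsto (fun u => T (u * (star m * m).fst u)) (CStarAlgebra.approximateUnit A)
      (𝓝 (h.extension hbi (star m * m))) := by
    refine tendsto_of_tendsto_of_dist (h.tendsto_map_fst hbi (star m * m)) ?_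
    refine squeeze_zero' (.of_forall fun _ => dist_nonneg) ?_
      (h.tendsto_sqrt_norm_unit_sub ‖star m * m‖)
    filter_upwards [hau.eventually_nonneg, hau.eventually_norm] with u hu hu1
    rw [dist_eq_norm]
    refine (h.norm_map_sub_mul_map_le hbi hu hu1 _).trans ?_
    gcongr
    exact doubleCentralizer_norm_fst_apply_le _ hu1
  refine CStarAlgebra.isClosed_nonneg.mem_of_tendsto hlim ?_
  filter_upwards [hau.eventually_star_eq] with u hu
  have hsq : u * (star m * m).fst u = star (m.fst u) * m.fst u := by
    have hcentral := (star m).central u (m.fst u)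
    rw [DoubleCentralizer.star_snd, hu] at hcentral
    exact hcentral.symm
  rw [hsq]
  exact T.map_nonneg (star_mul_self_nonneg _)

lemma isCPMap_extension (h : IsUnitalModuleMap S T p) (hbi : S.Biaction) :
    IsCPMap (h.extension hbi) := by
  rintro n M ⟨m, b, hb⟩
  refine matPos_of_forall_sum_nonneg _ (fun i j => ?_) fun α => ?_
  · rw [← h.extension_star, hb, hb, star_sum]
    simp only [star_mul, star_star]
  let y (k : Fin m) : 𝓜(ℂ, A) := ∑ i, b k i * S.iotaM hbi (α i)
  have hy (k : Fin m) : h.extension hbi (star (y k) * y k) =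
      ∑ i, ∑ j, star (α i) * h.extension hbi (star (b k i) * b k j) * α j := by
    simp_rw [y, star_sum, Finset.sum_mul, Finset.mul_sum, map_sum, star_mul, ← S.iotaM_star]
    refine Finset.sum_congr rfl fun i _ => Finset.sum_congr rfl fun j _ => ?_
    rw [← mul_assoc, h.extension_mul_iotaM, mul_assoc, h.extension_iotaM_mul]
  have hform : ∑ i, ∑ j, star (α i) * h.extension hbi (M i j) * α j =
      ∑ k, h.extension hbi (star (y k) * y k) := by
    simp_rw [hy, hb, map_sum, Finset.mul_sum, Finset.sum_mul]
    rw [Finset.sum_comm (s := (Finset.univ : Finset (Fin m)))]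
    exact Finset.sum_congr rfl fun i _ => Finset.sum_comm
  rw [hform]
  exact Finset.sum_nonneg fun k _ => h.extension_star_mul_self_nonneg hbi (y k)

lemma tendsto_extension (h : IsUnitalModuleMap S T p) (hbi : S.Biaction) {l : Filter 𝓜(ℂ, A)}
    {m : 𝓜(ℂ, A)} (hl : ∀ᶠ x in l, ‖x‖ ≤ 1)
    (hm : ∀ a : A, Tendsto (fun x : 𝓜(ℂ, A) => x.fst a) l (𝓝 (m.fst a))) :
    Tendsto (h.extension hbi) l (𝓝 (h.extension hbi m)) := by
  have hau := CStarAlgebra.increasingApproximateUnit A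
  have hne := hau.neBot
  have hunif : TendstoUniformlyOnFilter (fun u (x : 𝓜(ℂ, A)) => T (x.fst u)) (h.extension hbi)
      (CStarAlgebra.approximateUnit A) l := by
    refine Metric.tendstoUniformlyOnFilter_iff.2 fun ε hε => ?_
    have hsmall := (h.tendsto_sqrt_norm_unit_sub 1).eventually_lt_const hε
    filter_upwards [((hau.eventually_nonneg.and hau.eventually_norm).and hsmall).prod_mk hl]
      with z ⟨⟨⟨hu, hu1⟩, huε⟩, hx⟩
    rw [dist_comm, dist_eq_norm]
    refine (h.norm_map_fst_sub_extension_le hbi hu hu1 z.2).trans_lt (lt_of_le_of_lt ?_ huε)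
    gcongr
  exact hunif.tendsto_of_eventually_tendsto
    (.of_forall fun u => ((map_continuous T).tendsto _).comp (hm u)) (h.tendsto_map_fst hbi m)

end IsUnitalModuleMap

end MultiplierExtension

section MultiplicativeDomain

lemma IsCPMap.exists_gram {R Z : Type} [AddCommMonoid R] [Mul R] [Star R] [AddCommMonoid Z]
    [Mul Z] [Star Z] {φ : R → Z} (hφ : IsCPMap φ) {n : ℕ} (b : Fin n → R) :
    ∃ (m : ℕ) (c : Fin m → Fin n → Z), ∀ i j, φ (star (b i) * b j) = ∑ k, star (c k i) * c k j :=
  hφ n (fun i j => star (b i) * b j) ⟨1, fun _ => b, fun i j => by simp⟩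

lemma IsCPMap.map_star_mul_self_nonneg {R Z : Type} [AddCommMonoid R] [Mul R] [Star R]
    [NonUnitalSemiring Z] [PartialOrder Z] [StarRing Z] [StarOrderedRing Z] {φ : R → Z}
    (hφ : IsCPMap φ) (x : R) : 0 ≤ φ (star x * x) := by
  obtain ⟨m, c, hc⟩ := hφ.exists_gram fun _ : Fin 1 => x
  rw [hc 0 0]
  exact Finset.sum_nonneg fun k _ => star_mul_self_nonneg _

lemma sum_star_sub_mul_mul_sub_mul {R ι : Type*} [NonUnitalRing R] [StarRing R] [Fintype ι]
    (c d : ι → R) (α : R) :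
    ∑ k, star (d k - c k * α) * (d k - c k * α) =
      ∑ k, star (d k) * d k - (∑ k, star (d k) * c k) * α - star α * ∑ k, star (c k) * d k +
        star α * (∑ k, star (c k) * c k) * α := by
  simp only [Finset.mul_sum, Finset.sum_mul, ← Finset.sum_sub_distrib, ← Finset.sum_add_distrib]
  refine Finset.sum_congr rfl fun k _ => ?_
  simp only [star_sub, star_mul, sub_mul, mul_sub, mul_assoc]
  abel

variable [PartialOrder 𝔄] [StarOrderedRing 𝔄]
  {R : Type} [NonAssocSemiring R] [StarRing R] {φ : R → 𝔄}

lemma IsCPMap.map_one_nonneg (hφ : IsCPMap φ) : 0 ≤ φ 1 := by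
  simpa only [star_one, one_mul] using hφ.map_star_mul_self_nonneg 1

/-- Choi's argument: in a Gram decomposition of `φ`, the bound on `φ (star b * b)` forces the vector
of `b` to be that of `1` times `φ b`. -/
lemma IsCPMap.map_mul_of_map_star_mul_self_le (hφ : IsCPMap φ) (hφ1 : ‖φ 1‖ ≤ 1) {b : R}
    (hb : φ (star b * b) ≤ star (φ b) * φ b) (x : R) : φ (x * b) = φ x * φ b := by
  obtain ⟨m, c, hc⟩ := hφ.exists_gram ![1, b, star x]
  have h00 : φ 1 = ∑ k, star (c k 0) * c k 0 := by simpa using hc 0 0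
  have h01 : φ b = ∑ k, star (c k 0) * c k 1 := by simpa using hc 0 1
  have h11 : φ (star b * b) = ∑ k, star (c k 1) * c k 1 := by simpa using hc 1 1
  have h20 : φ x = ∑ k, star (c k 2) * c k 0 := by simpa using hc 2 0
  have h21 : φ (x * b) = ∑ k, star (c k 2) * c k 1 := by simpa using hc 2 1
  have h10 : star (φ b) = ∑ k, star (c k 1) * c k 0 := by
    simp only [h01, star_sum, star_mul, star_star]
  have hone : star (φ b) * φ 1 * φ b ≤ star (φ b) * φ b :=
    calc star (φ b) * φ 1 * φ b ≤ ‖φ 1‖ • (star (φ b) * φ b) :=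
          CStarAlgebra.star_left_conjugate_le_norm_smul hφ.map_one_nonneg.isSelfAdjoint
      _ ≤ (1 : ℝ) • (star (φ b) * φ b) :=
          smul_le_smul_of_nonneg_right hφ1 (star_mul_self_nonneg _)
      _ = star (φ b) * φ b := one_smul _ _
  have hsum : ∑ k, star (c k 1 - c k 0 * φ b) * (c k 1 - c k 0 * φ b) ≤ 0 := by
    rw [sum_star_sub_mul_mul_sub_mul, ← h00, ← h01, ← h10, ← h11, sub_add]
    exact sub_nonpos.2 ((sub_nonpos.2 hb).trans (sub_nonneg.2 hone))
  have hc1 (k : Fin m) : c k 1 = c k 0 * φ b :=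
    sub_eq_zero.1 (eq_zero_of_sum_star_mul_self_nonpos hsum k)
  simp only [h21, hc1, h20, Finset.sum_mul, mul_assoc]

variable {S : CStarAction 𝔄 A} {hbi : S.Biaction} {E : 𝓜(ℂ, A) → 𝔄}

lemma IsCPMap.map_mul_iotaM (hE : IsCPMap E) (hE1 : ‖E 1‖ ≤ 1)
    (hι : ∀ α, E (S.iotaM hbi α) = α) (x : 𝓜(ℂ, A)) (α : 𝔄) :
    E (x * S.iotaM hbi α) = E x * α := by
  have hmul := hE.map_mul_of_map_star_mul_self_le hE1 (b := S.iotaM hbi α)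
    (by rw [← S.iotaM_star, ← S.iotaM_mul, hι, hι]) x
  rwa [hι] at hmul

lemma IsCPMap.map_one_mul (hE : IsCPMap E) (hE1 : ‖E 1‖ ≤ 1)
    (hι : ∀ α, E (S.iotaM hbi α) = α) (α : 𝔄) : E 1 * α = α := by
  rw [← hE.map_mul_iotaM hE1 hι, one_mul, hι]

end MultiplicativeDomain

section Restriction

lemma exists_forall_norm_map_act_sub_lt {S : CStarAction 𝔄 A} {τ : A → 𝔄} {q : 𝔄} {l : Filter A}
    [l.NeBot] (hact : ∀ a α, τ (S.act a α) = τ a * α) (hq : ∀ α, q * α = α)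
    (hl : Tendsto τ l (𝓝 q)) (β : 𝔄) {ε : ℝ} (hε : 0 < ε) (s : Finset 𝔄) :
    ∃ a : A, ∀ α ∈ s, ‖τ (S.act a α) - β * α‖ < ε := by
  have hlim (α : 𝔄) : Tendsto (fun u => τ (S.act (S.act u β) α)) l (𝓝 (β * α)) := by
    simpa only [hact, hq] using (hl.mul_const β).mul_const α
  have hev : ∀ᶠ u in l, ∀ α ∈ s, ‖τ (S.act (S.act u β) α) - β * α‖ < ε :=
    (eventually_all_finset s).2 fun α _ => by
      simpa only [dist_eq_norm] using Metric.tendsto_nhds.1 (hlim α) ε hε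
  obtain ⟨u, hu⟩ := hev.exists
  exact ⟨S.act u β, hu⟩

lemma tendsto_approximateUnit_of_strictlyContinuous [PartialOrder A] [StarOrderedRing A]
    {X : Type*} [TopologicalSpace X] {E : 𝓜(ℂ, A) → X}
    (hE : ∀ l : Filter 𝓜(ℂ, A), l.NeBot → ∀ m, (∀ᶠ x in l, ‖x‖ ≤ 1) → ‖m‖ ≤ 1 →
      (∀ a : A, Tendsto (fun x => x * (a : 𝓜(ℂ, A))) l (𝓝 (m * (a : 𝓜(ℂ, A)))) ∧
        Tendsto (fun x => (a : 𝓜(ℂ, A)) * x) l (𝓝 ((a : 𝓜(ℂ, A)) * m))) →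
      Tendsto E l (𝓝 (E m))) :
    Tendsto (fun u : A => E (u : 𝓜(ℂ, A))) (CStarAlgebra.approximateUnit A) (𝓝 (E 1)) := by
  have hau := CStarAlgebra.increasingApproximateUnit A
  have hne := hau.neBot
  have hcoe := (doubleCentralizer_isometry_coe (𝕜 := ℂ) (B := A)).continuous
  refine tendsto_map'_iff.1 (hE (map (fun u : A => (u : 𝓜(ℂ, A))) _) inferInstance 1 ?_
    doubleCentralizer_norm_one_le fun a => ⟨tendsto_map'_iff.2 ?_, tendsto_map'_iff.2 ?_⟩)
  · simpa only [eventually_map, doubleCentralizer_norm_coe] using hau.eventually_norm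
  · simpa only [Function.comp_def, one_mul, doubleCentralizer_mul_coe, DoubleCentralizer.coe_fst,
      ContinuousLinearMap.mul_apply'] using (hcoe.tendsto _).comp (hau.tendsto_mul_right a)
  · simpa only [Function.comp_def, mul_one, doubleCentralizer_mul_coe, DoubleCentralizer.coe_fst,
      ContinuousLinearMap.mul_apply'] using (hcoe.tendsto _).comp (hau.tendsto_mul_left a)

variable [PartialOrder 𝔄] [StarOrderedRing 𝔄] [PartialOrder A] [StarOrderedRing A]
  {S : CStarAction 𝔄 A} {hbi : S.Biaction}

lemma IsCPMap.isRetraction_comp_coe {E : 𝓜(ℂ, A) →ₗ[ℂ] 𝔄} (hE : IsCPMap E) (hE1 : ‖E 1‖ ≤ 1)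
    (hι : ∀ α, E (S.iotaM hbi α) = α)
    (hone : Tendsto (fun u : A => E (u : 𝓜(ℂ, A))) (CStarAlgebra.approximateUnit A) (𝓝 (E 1))) :
    IsRetraction S fun a => E (a : 𝓜(ℂ, A)) := by
  let coe := DoubleCentralizer.coeHom (𝕜 := ℂ) (A := A)
  have hau := CStarAlgebra.increasingApproximateUnit A
  have hne := hau.neBot
  have hunit := hE.map_one_mul hE1 hι
  have hact (a : A) (α : 𝔄) : E (S.act a α : A) = E (a : 𝓜(ℂ, A)) * α := by
    rw [S.coe_act hbi, hE.map_mul_iotaM hE1 hι]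
  exact
    { map_add a b := (congr_arg E (map_add coe a b)).trans (map_add E _ _)
      map_smulC c a := (congr_arg E (map_smul coe c a)).trans (map_smul E _ _)
      pos a := isPosElem_iff_nonneg.2 <| by
        have hsq : ((star a * a : A) : 𝓜(ℂ, A)) = star (a : 𝓜(ℂ, A)) * a :=
          (map_mul coe _ _).trans (congr_arg (· * _) (map_star coe a))
        rw [hsq]
        exact hE.map_star_mul_self_nonneg _
      map_act := hact
      strict_dense β _ hε s := exists_forall_norm_map_act_sub_lt hact hunit hone β hε s
      bai := ⟨_, E 1, hne, ⟨1, hau.eventually_norm⟩, hau.tendsto_mul_right,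
        hau.tendsto_mul_left, hE.map_one_nonneg.star_eq, hunit _,
        fun α => hone.mul_const α, fun α => hone.const_mul α⟩ }

end Restriction

theorem retraction_iff_idempotent_ccp_extension_general
    (S : CStarAction 𝔄 A) (hbi : S.Biaction) (τ : A → 𝔄) :
    IsRetraction S τ ↔
      ∃ τ' : 𝓜(ℂ, A) → 𝔄,
        (∀ a : A, τ' (a : 𝓜(ℂ, A)) = τ a) ∧
        (∀ x y : 𝓜(ℂ, A), τ' (x + y) = τ' x + τ' y) ∧
        (∀ (c : ℂ) (x : 𝓜(ℂ, A)), τ' (c • x) = c • τ' x) ∧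
        IsCPMap τ' ∧
        (∀ x : 𝓜(ℂ, A), ‖τ' x‖ ≤ ‖x‖) ∧
        (∀ α : 𝔄, τ' (S.iotaM hbi α) = α) ∧
        (∀ (l : Filter 𝓜(ℂ, A)), l.NeBot → ∀ m : 𝓜(ℂ, A),
          (∀ᶠ x in l, ‖x‖ ≤ 1) → ‖m‖ ≤ 1 →
          (∀ a : A,
            Filter.Tendsto (fun x => x * (a : 𝓜(ℂ, A))) l (𝓝 (m * (a : 𝓜(ℂ, A)))) ∧
            Filter.Tendsto (fun x => (a : 𝓜(ℂ, A)) * x) l (𝓝 ((a : 𝓜(ℂ, A)) * m))) →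
          Filter.Tendsto (fun x => τ' x) l (𝓝 (τ' m))) := by
  let _ := CStarAlgebra.spectralOrder 𝔄
  have := CStarAlgebra.spectralOrderedRing 𝔄
  let _ := CStarAlgebra.spectralOrder A
  have := CStarAlgebra.spectralOrderedRing A
  constructor
  · intro hτ
    obtain ⟨T, rfl⟩ := hτ.exists_positiveLinearMap
    obtain ⟨p, hT⟩ := hτ.exists_isUnitalModuleMap
    refine ⟨hT.extension hbi, hT.extension_coe hbi, map_add _, map_smul _,
      hT.isCPMap_extension hbi, hT.norm_extension_le hbi, hT.extension_iotaM hbi,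
      fun l _ m hl _ hlm => hT.tendsto_extension hbi hl fun a => ?_⟩
    have hlma := (hlm a).1
    simp only [doubleCentralizer_mul_coe] at hlma
    exact doubleCentralizer_isometry_coe.isEmbedding.tendsto_nhds_iff.2 hlma
  · rintro ⟨E, hEτ, hadd, hsmul, hcp, hnorm, hι, hcont⟩
    obtain rfl := funext hEτ
    exact IsCPMap.isRetraction_comp_coe (E := ⟨⟨E, hadd⟩, hsmul⟩) hcp
      ((hnorm 1).trans doubleCentralizer_norm_one_le) hι
      (tendsto_approximateUnit_of_strictlyContinuous hcont)

/-- If the action of `𝔄` on `A` is non degenerate, then the `𝔄`-retractions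
are exactly those linear maps `τ : A → 𝔄` which extend to an idempotent contractive completely
positive map `τ̃ : M(A) → 𝔄` that is strictly continuous on the unit ball of `M(A)`. -/
theorem retraction_iff_idempotent_ccp_extension
    (S : CStarAction 𝔄 A) (hnd : S.NonDegenerate) (hbi : S.Biaction) (τ : A → 𝔄) :
    IsRetraction S τ ↔
      ∃ τ' : 𝓜(ℂ, A) → 𝔄,
        (∀ a : A, τ' (a : 𝓜(ℂ, A)) = τ a) ∧
        (∀ x y : 𝓜(ℂ, A), τ' (x + y) = τ' x + τ' y) ∧
        (∀ (c : ℂ) (x : 𝓜(ℂ, A)), τ' (c • x) = c • τ' x) ∧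
        IsCPMap τ' ∧
        (∀ x : 𝓜(ℂ, A), ‖τ' x‖ ≤ ‖x‖) ∧
        (∀ α : 𝔄, τ' (S.iotaM hbi α) = α) ∧
        (∀ (l : Filter 𝓜(ℂ, A)), l.NeBot → ∀ m : 𝓜(ℂ, A),
          (∀ᶠ x in l, ‖x‖ ≤ 1) → ‖m‖ ≤ 1 →
          (∀ a : A,
            Filter.Tendsto (fun x => x * (a : 𝓜(ℂ, A))) l (𝓝 (m * (a : 𝓜(ℂ, A)))) ∧
            Filter.Tendsto (fun x => (a : 𝓜(ℂ, A)) * x) l (𝓝 ((a : 𝓜(ℂ, A)) * m))) →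
          Filter.Tendsto (fun x => τ' x) l (𝓝 (τ' m))) :=
  retraction_iff_idempotent_ccp_extension_general S hbi τ
end
end
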